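/- Let ε_1, …, ε_n be independent Rademacher random variables, let H be a real Hilbert space with norm ‖·‖, let p ≥ 1 and let v_1, …, v_n be vectors in H. Then the function Φ(t_1, …, t_n) = log E‖ e^{t_1}ε_1 v_1 + … + e^{t_n}ε_n v_n ‖^p is convex on ℝ^n. -/

import Mathlib

/-!
For `p ≥ 1` the function `q x = (E ‖∑ j, x j ε_j v_j‖ ^ p) ^ (1 / p)` is a seminorm on `ℝ^n`, and
since `ε` is symmetric it does not change when a coordinate of `x` changes sign. A convex function
with this symmetry is monotone in the absolute values of the coordinates, so the convexity of `exp`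
makes `t ↦ q (e^{t_1}, …, e^{t_n})` convex. Adding `r` to all `t_j` multiplies this function by
`e^r`; with such shifts two of its values can be normalised to `1`, and then convexity of the
function gives convexity of its logarithm.
-/

open Finset

theorem convexOn_log_of_map_add_smul_eq_exp_mul {E : Type*} [AddCommGroup E] [Module ℝ E]
    {f : E → ℝ} (hf : ConvexOn ℝ Set.univ f) (hpos : ∀ x, 0 < f x) (e : E)
    (hshift : ∀ x (r : ℝ), f (x + r • e) = Real.exp r * f x) :
    ConvexOn ℝ Set.univ fun x => Real.log (f x) := by
  refine ⟨convex_univ, fun x _ y _ a b ha hb hab => ?_⟩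
  have normalised (z : E) : f (z + (-Real.log (f z)) • e) = 1 := by
    rw [hshift, Real.exp_neg, Real.exp_log (hpos z), inv_mul_cancel₀ (hpos z).ne']
  have hle := hf.2 (Set.mem_univ (x + (-Real.log (f x)) • e))
    (Set.mem_univ (y + (-Real.log (f y)) • e)) ha hb hab
  have hcomb : a • (x + (-Real.log (f x)) • e) + b • (y + (-Real.log (f y)) • e) =
      (a • x + b • y) + (-(a • Real.log (f x) + b • Real.log (f y))) • e := by
    simp only [smul_eq_mul]
    module
  rw [normalised, normalised, hcomb, hshift, Real.exp_neg, ← add_smul, hab, one_smul,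
    inv_mul_le_one₀ (Real.exp_pos _)] at hle
  exact (Real.log_le_iff_le_exp (hpos _)).2 hle

section Unconditional

variable {ι : Type*} [DecidableEq ι]

/-- Invariance under the sign change of any single coordinate, as for the norm of coefficient
sequences with respect to a 1-unconditional basis. For finite `ι` this amounts to invariance under
all sign changes. -/
def IsUnconditional (f : (ι → ℝ) → ℝ) : Prop :=
  ∀ i x, f (Function.update x i (-x i)) = f x

namespace IsUnconditional

theorem apply_update_le {f : (ι → ℝ) → ℝ} (hf : IsUnconditional f)
    (hconv : ConvexOn ℝ Set.univ f) (x : ι → ℝ) {i : ι} {a : ℝ} (ha : |a| ≤ |x i|) :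
    f (Function.update x i a) ≤ f x := by
  have hmem : Function.update x i a ∈ segment ℝ (Function.update x i (-x i)) x := by
    have ha' : a ∈ segment ℝ (-x i) (x i) := by
      rw [segment_eq_uIcc, Set.mem_uIcc]
      grind
    simpa only [Pi.image_update_segment, Function.update_eq_self] using
      Set.mem_image_of_mem (Function.update x i) ha'
  simpa only [hf i x, max_self] using
    hconv.le_max_of_mem_segment (Set.mem_univ _) (Set.mem_univ _) hmem

theorem apply_le_of_abs_le [Finite ι] {f : (ι → ℝ) → ℝ} (hf : IsUnconditional f)
    (hconv : ConvexOn ℝ Set.univ f) {x y : ι → ℝ} (hxy : ∀ i, |x i| ≤ |y i|) : f x ≤ f y := by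
  have := Fintype.ofFinite ι
  suffices h : ∀ s : Finset ι, f (s.piecewise x y) ≤ f y by simpa using h univ
  intro s
  induction s using Finset.induction_on with
  | empty => simp
  | insert i s hi ih =>
    rw [piecewise_insert]
    refine (hf.apply_update_le hconv _ ?_).trans ih
    simpa only [piecewise_eq_of_notMem _ _ _ hi] using hxy i

variable [Finite ι] {q : Seminorm ℝ (ι → ℝ)}

theorem eq_zero_of_apply_eq_zero (hq : IsUnconditional q) {x : ι → ℝ} (hx : ∀ i, x i ≠ 0)
    (hqx : q x = 0) (y : ι → ℝ) : q y = 0 := by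
  have := Fintype.ofFinite ι
  set C : ℝ := ∑ i, |y i / x i|
  have hy (i : ι) : |y i| ≤ |(C • x) i| := by
    have hC : |y i / x i| ≤ |C| :=
      (single_le_sum (f := fun i => |y i / x i|) (fun i _ => abs_nonneg _) (mem_univ i)).trans
        (le_abs_self C)
    rwa [Pi.smul_apply, smul_eq_mul, abs_mul, ← div_le_iff₀ (abs_pos.2 (hx i)), ← abs_div]
  refine le_antisymm ?_ (apply_nonneg q y)
  simpa only [map_smul_eq_mul, hqx, mul_zero] using hq.apply_le_of_abs_le q.convexOn hy

theorem convexOn_comp_exp (hq : IsUnconditional q) :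
    ConvexOn ℝ Set.univ fun t : ι → ℝ => q fun i => Real.exp (t i) := by
  refine ⟨convex_univ, fun t _ u _ a b ha hb hab => ?_⟩
  refine le_trans (hq.apply_le_of_abs_le q.convexOn fun i => ?_)
    (q.convexOn.2 (Set.mem_univ _) (Set.mem_univ _) ha hb hab)
  exact abs_le_abs_of_nonneg (Real.exp_pos _).le
    (convexOn_exp.2 (Set.mem_univ (t i)) (Set.mem_univ (u i)) ha hb hab)

theorem convexOn_log_comp_exp (hq : IsUnconditional q) :
    ConvexOn ℝ Set.univ fun t : ι → ℝ => Real.log (q fun i => Real.exp (t i)) := by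
  by_cases hzero : ∃ t : ι → ℝ, q (fun i => Real.exp (t i)) = 0
  · obtain ⟨t, ht⟩ := hzero
    simp only [hq.eq_zero_of_apply_eq_zero (fun i => Real.exp_ne_zero (t i)) ht]
    exact convexOn_const _ convex_univ
  · rw [not_exists] at hzero
    refine convexOn_log_of_map_add_smul_eq_exp_mul hq.convexOn_comp_exp
      (fun t => (apply_nonneg q _).lt_of_ne' (hzero t)) 1 fun t r => ?_
    have hscale : (fun i => Real.exp ((t + r • (1 : ι → ℝ)) i)) =
        Real.exp r • fun i => Real.exp (t i) := by
      ext i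
      simp [Real.exp_add, mul_comm]
    rw [hscale, map_smul_eq_mul, Real.norm_eq_abs, Real.abs_exp]

end IsUnconditional

end Unconditional

section Rademacher

variable {ι E : Type*} [Fintype ι] [SeminormedAddCommGroup E] [NormedSpace ℝ E]

/-- The signed sum `∑ j, x j ε_j v_j` as a linear map of the coefficients `x`, where `true` and
`false` encode the signs `1` and `-1`. -/
noncomputable def signedSum (v : ι → E) (s : ι → Bool) : (ι → ℝ) →ₗ[ℝ] E :=
  Fintype.linearCombination ℝ fun j => (if s j then (1 : ℝ) else -1) • v j

theorem signedSum_apply (v : ι → E) (s : ι → Bool) (x : ι → ℝ) :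
    signedSum v s x = ∑ j, (x j * (if s j then (1 : ℝ) else -1)) • v j := by
  simp only [signedSum, Fintype.linearCombination_apply, smul_smul]

variable [DecidableEq ι]

theorem signedSum_update_neg (v : ι → E) (s : ι → Bool) (x : ι → ℝ) (i : ι) :
    signedSum v s (Function.update x i (-x i)) =
      signedSum v (Function.update s i (!s i)) x := by
  simp only [signedSum_apply]
  refine sum_congr rfl fun j _ => ?_
  congr 1
  obtain rfl | hj := eq_or_ne j i
  · cases s j <;> simp
  · simp [hj]

variable (p : ENNReal) [Fact (1 ≤ p)] (v : ι → E)

/-- The `L^p` seminorm `x ↦ (E ‖∑ j, x j ε_j v_j‖ ^ p) ^ (1 / p)` of a Rademacher sum as a function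
of its coefficients: the `ℓ^p` seminorm of the family of all signed sums, rescaled to the uniform
probability measure on the signs. For `p = ⊤` the rescaling factor is `1`, as `1 / p.toReal = 0`,
and this is the maximum over all signs. -/
noncomputable def rademacherSeminorm : Seminorm ℝ (ι → ℝ) :=
  (((2 : NNReal) ^ Fintype.card ι)⁻¹ ^ (1 / p.toReal)) •
    (normSeminorm ℝ (PiLp p fun _ : ι → Bool => E)).comp
      ((WithLp.linearEquiv p ℝ ((ι → Bool) → E)).symm.toLinearMap ∘ₗ LinearMap.pi (signedSum v))

theorem rademacherSeminorm_apply (x : ι → ℝ) :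
    rademacherSeminorm p v x = ((2 : ℝ) ^ Fintype.card ι)⁻¹ ^ (1 / p.toReal) *
      ‖WithLp.toLp p fun s => signedSum v s x‖ := by
  simp only [rademacherSeminorm, smul_apply, NNReal.smul_def, smul_eq_mul,
    NNReal.coe_rpow, NNReal.coe_inv, NNReal.coe_pow, NNReal.coe_ofNat]
  rfl

theorem isUnconditional_rademacherSeminorm : IsUnconditional (rademacherSeminorm p v) := by
  intro i x
  have hflip : Function.Involutive fun s : ι → Bool => Function.update s i (!s i) := by
    intro s
    simp
  simp only [rademacherSeminorm_apply, signedSum_update_neg]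
  congr 1
  exact (LinearIsometryEquiv.piLpCongrLeft p ℝ E hflip.toPerm).norm_map
    (WithLp.toLp p fun s => signedSum v s x)

theorem rademacherSeminorm_rpow_toReal (hp : p ≠ ⊤) (x : ι → ℝ) :
    rademacherSeminorm p v x ^ p.toReal =
      ((2 : ℝ) ^ Fintype.card ι)⁻¹ * ∑ s, ‖signedSum v s x‖ ^ p.toReal := by
  have hp₀ : 0 < p.toReal := ENNReal.toReal_pos (zero_lt_one.trans_le Fact.out).ne' hp
  rw [rademacherSeminorm_apply, PiLp.norm_eq_sum hp₀, ← Real.mul_rpow (by positivity)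
    (by positivity), one_div, Real.rpow_inv_rpow (by positivity) hp₀.ne']

theorem log_moment_rademacher_hilbert_convex_general {p : ℝ} (hp : 1 ≤ p) (v : ι → E) :
    ConvexOn ℝ Set.univ (fun t : ι → ℝ =>
      Real.log ((2 ^ Fintype.card ι : ℝ)⁻¹ *
        ∑ s : ι → Bool,
          ‖∑ j, (Real.exp (t j) * (if s j then (1 : ℝ) else -1)) • v j‖ ^ p)) := by
  have hp₀ : 0 < p := zero_lt_one.trans_le hp
  have : Fact (1 ≤ ENNReal.ofReal p) := ⟨ENNReal.one_le_ofReal.2 hp⟩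
  set q := rademacherSeminorm (ENNReal.ofReal p) v
  have hmoment (x : ι → ℝ) : Real.log ((2 ^ Fintype.card ι : ℝ)⁻¹ *
      ∑ s : ι → Bool, ‖∑ j, (x j * (if s j then (1 : ℝ) else -1)) • v j‖ ^ p) =
        p * Real.log (q x) := by
    have hq := rademacherSeminorm_rpow_toReal (ENNReal.ofReal p) v ENNReal.ofReal_ne_top x
    simp only [ENNReal.toReal_ofReal hp₀.le, signedSum_apply] at hq
    rw [← hq]
    obtain hzero | hpos := (apply_nonneg q x).eq_or_lt'
    · simp [q, hzero, hp₀.ne']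
    · exact Real.log_rpow hpos p
  simp only [hmoment]
  exact (isUnconditional_rademacherSeminorm _ v).convexOn_log_comp_exp.smul hp₀.le

end Rademacher

/-- For independent Rademacher signs `ε_1, …, ε_n` (modelled by the uniform measure on
`{-1,1}^n`, encoded via `Fin n → Bool`), a real Hilbert space `H`, `p ≥ 1` and vectors
`v_1, …, v_n` in `H`, the function
`Φ(t) = log E‖e^{t_1}ε_1 v_1 + … + e^{t_n}ε_n v_n‖^p` is convex on `ℝ^n`. -/
theorem log_moment_rademacher_hilbert_convex (n : ℕ)
    {H : Type*} [NormedAddCommGroup H] [InnerProductSpace ℝ H]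
    (p : ℝ) (hp : 1 ≤ p) (v : Fin n → H) :
    ConvexOn ℝ Set.univ (fun t : Fin n → ℝ =>
      Real.log ((2 ^ n : ℝ)⁻¹ *
        ∑ s : Fin n → Bool,
          ‖∑ j, (Real.exp (t j) * (if s j then (1 : ℝ) else -1)) • v j‖ ^ p)) := by
  simpa only [Fintype.card_fin] using log_moment_rademacher_hilbert_convex_general hp v
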